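/- arXiv:2303.13304 — 2 statements merged into one kernel-verified Lean document; each statement's English description precedes it below -/
import Mathlib

section
/- Let a and b be positive divisors of d with a < d and b < d, and let u be an integer. There exists a unitary matrix W on ℂ^d with W X^a W† ≈ X^{ua} and W Z^b W† ≈ Z^b if and only if gcd(u, d/a) = 1 and u·a·b ≡ a·b (mod d). -/
open Matrix

/-- The primitive `d`-th root of unity `ω = e^{2πi/d}`. -/
noncomputable def omega (d : ℕ) : ℂ := Complex.exp (2 * Real.pi * Complex.I / d)

/-- The power `X^s` (for any integer `s`) of the shift matrix `X` on `ℂ^d`,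
`X|j⟩ = |j+1 mod d⟩`; its `(i,j)` entry is `1` iff `i ≡ j + s (mod d)`. -/
def Xpow (d : ℕ) (s : ℤ) : Matrix (Fin d) (Fin d) ℂ :=
  Matrix.of fun i j => if (i : ℤ) = (((j : ℕ) : ℤ) + s) % (d : ℤ) then (1 : ℂ) else 0

/-- The power `Z^t` (for any integer `t`) of the clock matrix `Z` on `ℂ^d`,
`Z|j⟩ = ω^j |j⟩`; it is diagonal with entries `ω^{t·j} = e^{2πi·t·j/d}`. -/
noncomputable def Zpow (d : ℕ) (t : ℤ) : Matrix (Fin d) (Fin d) ℂ :=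
  Matrix.diagonal fun j => Complex.exp (2 * Real.pi * Complex.I * (t : ℂ) * ((j : ℕ) : ℂ) / (d : ℂ))

/-- The generalized Pauli matrix `X^s Z^t` on `ℂ^d`. -/
noncomputable def GPM (d : ℕ) (s t : ℤ) : Matrix (Fin d) (Fin d) ℂ :=
  Xpow d s * Zpow d t

/-- `A ≈ B` : equality up to a unimodular (global phase) scalar. -/
def PhaseEq {n : Type*} (A B : Matrix n n ℂ) : Prop :=
  ∃ c : ℂ, ‖c‖ = 1 ∧ A = c • B

/-!
Conjugation by `W` is an automorphism of the matrix algebra, so it preserves, up to phase, the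
relations between `X^s` and `Z^t`: the order of `X^s` modulo scalars determines `gcd(s, d)`, and the
commutation phase of `Z^t` past `X^s` determines `s t` modulo `d`.

Conversely, if `gcd(s, d) = gcd(s', d)`, then `s = u s'` in `ℤ/d` for some unit `u`. Fix a
representative `r` in each coset of the ideal `(s')` and permute `ℤ/d` by `r + h ↦ r + u h`. This
intertwines translation by `s'` with translation by `s`, and it preserves `x ↦ t x` as soon as
`t u s' = t s'`. The associated permutation matrix is the required unitary.
-/

section CosetScale

variable {R M : Type*} [Ring R] [AddCommGroup M] [Module R M] (N : Submodule R M)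

/-- A chosen representative of the coset `x + N`. -/
noncomputable def cosetRep (x : M) : M :=
  Function.surjInv N.mkQ_surjective (N.mkQ x)

theorem sub_cosetRep_mem (x : M) : x - cosetRep N x ∈ N := by
  rw [← Submodule.Quotient.eq]
  exact (Function.surjInv_eq N.mkQ_surjective (N.mkQ x)).symm

theorem cosetRep_add_of_mem {h : M} (hh : h ∈ N) (x : M) :
    cosetRep N (x + h) = cosetRep N x := by
  have hx : N.mkQ (x + h) = N.mkQ x := by
    rw [map_add, add_eq_left]
    exact (Submodule.Quotient.mk_eq_zero N).mpr hh
  rw [cosetRep, hx, cosetRep]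

theorem cosetRep_cosetRep_add_of_mem {h : M} (hh : h ∈ N) (x : M) :
    cosetRep N (cosetRep N x + h) = cosetRep N x := by
  have hx : cosetRep N x + h = x + (h - (x - cosetRep N x)) := by abel
  rw [hx, cosetRep_add_of_mem N (N.sub_mem hh (sub_cosetRep_mem N x))]

/-- The permutation of `M` that scales each coset of `N` by the unit `u`, about its chosen
representative: `r + h ↦ r + u h` for `h ∈ N`. -/
noncomputable def cosetScale (u : Rˣ) : Equiv.Perm M where
  toFun x := cosetRep N x + u • (x - cosetRep N x)
  invFun x := cosetRep N x + u⁻¹ • (x - cosetRep N x)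
  left_inv x := by
    have h : cosetRep N (cosetRep N x + u • (x - cosetRep N x)) = cosetRep N x :=
      cosetRep_cosetRep_add_of_mem N (N.smul_mem (u : R) (sub_cosetRep_mem N x)) x
    simp [h]
  right_inv x := by
    have h : cosetRep N (cosetRep N x + u⁻¹ • (x - cosetRep N x)) = cosetRep N x :=
      cosetRep_cosetRep_add_of_mem N (N.smul_mem (u⁻¹ : Rˣ).val (sub_cosetRep_mem N x)) x
    simp [h]

theorem cosetScale_apply (u : Rˣ) (x : M) :
    cosetScale N u x = cosetRep N x + u • (x - cosetRep N x) := rfl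

theorem cosetScale_add_of_mem (u : Rˣ) {h : M} (hh : h ∈ N) (x : M) :
    cosetScale N u (x + h) = cosetScale N u x + u • h := by
  rw [cosetScale_apply, cosetScale_apply, cosetRep_add_of_mem N hh, add_sub_right_comm, smul_add,
    add_assoc]

theorem map_cosetScale_of_map_smul_eq {M' : Type*} [AddZeroClass M'] (f : M →+ M') (u : Rˣ)
    (hf : ∀ h ∈ N, f (u • h) = f h) (x : M) : f (cosetScale N u x) = f x := by
  rw [cosetScale_apply, map_add, hf _ (sub_cosetRep_mem N x), ← map_add, add_sub_cancel]

end CosetScale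

section GCD

variable {d : ℕ} {s s' : ℤ}

theorem natCast_dvd_intCast_zmod_iff {n : ℕ} (hn : n ∣ d) :
    (n : ZMod d) ∣ (s : ZMod d) ↔ (n : ℤ) ∣ s := by
  refine ⟨fun ⟨c, hc⟩ => ?_, fun h => by simpa using (Int.castRingHom (ZMod d)).map_dvd h⟩
  obtain ⟨c, rfl⟩ := ZMod.intCast_surjective c
  have hd : (d : ℤ) ∣ s - n * c := by
    rw [← ZMod.intCast_zmod_eq_zero_iff_dvd]
    push_cast
    rw [hc, sub_self]
  exact (dvd_sub_left (dvd_mul_right _ c)).mp ((Int.natCast_dvd_natCast.mpr hn).trans hd)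

theorem gcd_eq_gcd_of_associated (h : Associated (s : ZMod d) (s' : ZMod d)) :
    Int.gcd s d = Int.gcd s' d := by
  refine Nat.dvd_left_iff_eq.mp fun n => ?_
  simp only [Int.dvd_gcd_iff, Int.natCast_dvd_natCast]
  refine and_congr_left fun hn => ?_
  rw [← natCast_dvd_intCast_zmod_iff hn, ← natCast_dvd_intCast_zmod_iff hn,
    h.dvd_iff_dvd_right]

theorem associated_intCast_gcd (s : ℤ) : Associated (s : ZMod d) (Int.gcd s d : ZMod d) := by
  obtain ⟨g, hg, u, hu, hs⟩ := ZMod.eq_unit_mul_divisor (s : ZMod d)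
  have hsg : Associated (s : ZMod d) ((g : ℤ) : ZMod d) := by
    rw [hs, Int.cast_natCast]
    exact associated_unit_mul_left _ _ hu
  rw [gcd_eq_gcd_of_associated hsg, Int.gcd_natCast_natCast, Nat.gcd_eq_left hg]
  exact_mod_cast hsg

theorem associated_of_gcd_eq_gcd (h : Int.gcd s d = Int.gcd s' d) :
    Associated (s : ZMod d) (s' : ZMod d) :=
  (associated_intCast_gcd s).trans (h ▸ (associated_intCast_gcd s').symm)

theorem gcd_dvd_gcd_of_forall_dvd_mul (h : ∀ k : ℕ, (d : ℤ) ∣ k * s → (d : ℤ) ∣ k * s')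
    (hd : d ≠ 0) : Int.gcd s d ∣ Int.gcd s' d := by
  obtain ⟨k, hk⟩ : Int.gcd s d ∣ d := Int.gcd_dvd_natAbs_right s d
  obtain ⟨v, hv⟩ : (Int.gcd s d : ℤ) ∣ s := Int.gcd_dvd_left ..
  have hk' : (d : ℤ) = Int.gcd s d * k := mod_cast hk
  have hk0 : (k : ℤ) ≠ 0 := by
    intro h0
    exact hd (by simpa [h0] using hk')
  have hdvd := h k ⟨v, by linear_combination (k : ℤ) * hv - v * hk'⟩
  rw [hk', mul_comm, mul_dvd_mul_iff_left hk0] at hdvd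
  exact Int.dvd_gcd hdvd ⟨k, hk'⟩

theorem gcd_eq_gcd_mul_iff {a : ℕ} (ha : a ∣ d) (ha0 : 0 < a) (u : ℤ) :
    Int.gcd a d = Int.gcd (u * a) d ↔ Int.gcd u ((d / a : ℕ) : ℤ) = 1 := by
  obtain ⟨m, rfl⟩ := ha
  have h : Int.gcd (u * a) ((a * m : ℕ) : ℤ) = Int.gcd u m * a := by
    rw [Nat.cast_mul, mul_comm (a : ℤ) m, Int.gcd_mul_right, Int.natAbs_natCast]
  rw [h, Nat.mul_div_cancel_left m ha0, Int.gcd_natCast_natCast, Nat.gcd_mul_right_right,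
    eq_comm, Nat.mul_eq_right ha0.ne']

end GCD

section PermMatrix

variable {n R : Type*} [Fintype n] [DecidableEq n] (σ : Equiv.Perm n)

theorem permMatrix_mul_mul_conjTranspose [NonAssocSemiring R] [StarRing R] (A : Matrix n n R) :
    σ.permMatrix R * A * (σ.permMatrix R)ᴴ = A.submatrix σ σ := by
  rw [conjTranspose_permMatrix, PEquiv.toMatrix_toPEquiv_mul, PEquiv.mul_toMatrix_toPEquiv]
  rfl

theorem permMatrix_mem_unitaryGroup [CommRing R] [StarRing R] :
    σ.permMatrix R ∈ Matrix.unitaryGroup n R := by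
  rw [Matrix.mem_unitaryGroup_iff, star_eq_conjTranspose]
  simpa using permMatrix_mul_mul_conjTranspose σ (1 : Matrix n n R)

end PermMatrix

section Pauli

variable {d : ℕ} [NeZero d]

theorem finEquiv_apply_eq_natCast (i : Fin d) : ZMod.finEquiv d i = ((i : ℕ) : ZMod d) := by
  obtain _ | d := d
  · exact i.elim0
  · exact (Fin.cast_val_eq_self i).symm

theorem Xpow_apply (s : ℤ) (i j : Fin d) :
    Xpow d s i j = if ZMod.finEquiv d i = ZMod.finEquiv d j + s then 1 else 0 := by
  have hi : ((i : ℕ) : ℤ) % d = i := Int.emod_eq_of_lt (by positivity) (mod_cast i.isLt)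
  have h := ZMod.intCast_eq_intCast_iff' i (j + s) d
  rw [hi] at h
  push_cast at h
  simp only [Xpow, Matrix.of_apply, finEquiv_apply_eq_natCast, h]

theorem Zpow_eq_diagonal (t : ℤ) :
    Zpow d t = Matrix.diagonal fun j => ZMod.stdAddChar ((t : ZMod d) * ZMod.finEquiv d j) := by
  refine congrArg Matrix.diagonal (funext fun j => ?_)
  have h := ZMod.stdAddChar_coe (N := d) (t * j)
  push_cast at h
  rw [finEquiv_apply_eq_natCast, h, mul_assoc _ (t : ℂ)]

theorem Xpow_eq_one_of_dvd {s : ℤ} (hs : (d : ℤ) ∣ s) : Xpow d s = 1 := by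
  ext i j
  simp [Xpow_apply, Matrix.one_apply, (ZMod.intCast_zmod_eq_zero_iff_dvd s d).mpr hs]

theorem Xpow_add (s t : ℤ) : Xpow d (s + t) = Xpow d s * Xpow d t := by
  ext i j
  have hk (k : Fin d) : ZMod.finEquiv d k = ZMod.finEquiv d j + t ↔
      k = (ZMod.finEquiv d).symm (ZMod.finEquiv d j + t) :=
    (ZMod.finEquiv d).toEquiv.eq_symm_apply.symm
  simp [Matrix.mul_apply, Xpow_apply, hk, add_assoc, add_comm (s : ZMod d)]

theorem Xpow_pow (s : ℤ) (k : ℕ) : Xpow d s ^ k = Xpow d (k * s) := by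
  induction k with
  | zero => simp [Xpow_eq_one_of_dvd]
  | succ k ih => rw [pow_succ, ih, ← Xpow_add, Nat.cast_succ, add_one_mul]

theorem dvd_of_smul_Xpow_eq_one {s : ℤ} {c : ℂ} (h : c • Xpow d s = 1) : (d : ℤ) ∣ s := by
  have h00 := congr_fun₂ h 0 0
  by_contra hs
  rw [← ZMod.intCast_zmod_eq_zero_iff_dvd, eq_comm] at hs
  simp [Xpow_apply, hs] at h00

theorem Zpow_mul_Xpow (s t : ℤ) :
    Zpow d t * Xpow d s =
      (ZMod.stdAddChar (s * t : ZMod d) : ℂ) • (Xpow d s * Zpow d t) := by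
  ext i j
  rw [Zpow_eq_diagonal, Matrix.diagonal_mul, Matrix.smul_apply, Matrix.mul_diagonal, Xpow_apply]
  split_ifs with h
  · rw [h, mul_add, add_comm, AddChar.map_add_eq_mul, mul_comm (s : ZMod d)]
    simp [mul_comm]
  · simp

theorem Xpow_mul_Zpow_ne_zero (s t : ℤ) : Xpow d s * Zpow d t ≠ 0 := by
  intro h
  have hs0 := congr_fun₂ h ((ZMod.finEquiv d).symm s) 0
  simp [Xpow_apply, Zpow_eq_diagonal] at hs0

theorem gcd_dvd_gcd_of_map_Xpow
    (φ : Matrix (Fin d) (Fin d) ℂ →ₐ[ℂ] Matrix (Fin d) (Fin d) ℂ)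
    {s s' : ℤ} {c : ℂ} (hX : φ (Xpow d s) = c • Xpow d s') : Int.gcd s d ∣ Int.gcd s' d := by
  refine gcd_dvd_gcd_of_forall_dvd_mul (fun k hk => ?_) (NeZero.ne d)
  have h := map_pow φ (Xpow d s) k
  rw [Xpow_pow, Xpow_eq_one_of_dvd hk, map_one, hX, smul_pow, Xpow_pow] at h
  exact dvd_of_smul_Xpow_eq_one h.symm

theorem gcd_eq_gcd_of_map_Xpow
    (φ : Matrix (Fin d) (Fin d) ℂ ≃ₐ[ℂ] Matrix (Fin d) (Fin d) ℂ) {s s' : ℤ} {c : ℂ}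
    (hc : c ≠ 0) (hX : φ (Xpow d s) = c • Xpow d s') : Int.gcd s d = Int.gcd s' d := by
  have hX' : φ.symm (Xpow d s') = c⁻¹ • Xpow d s := by
    rw [AlgEquiv.symm_apply_eq, map_smul, hX, inv_smul_smul₀ hc]
  exact Nat.dvd_antisymm (gcd_dvd_gcd_of_map_Xpow φ.toAlgHom hX)
    (gcd_dvd_gcd_of_map_Xpow φ.symm.toAlgHom hX')

theorem mul_modEq_mul_of_map_Xpow_of_map_Zpow
    (φ : Matrix (Fin d) (Fin d) ℂ →ₐ[ℂ] Matrix (Fin d) (Fin d) ℂ) {s s' t t' : ℤ} {c e : ℂ}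
    (hc : c ≠ 0) (he : e ≠ 0) (hX : φ (Xpow d s) = c • Xpow d s')
    (hZ : φ (Zpow d t) = e • Zpow d t') : s' * t' ≡ s * t [ZMOD d] := by
  have h := congrArg φ (Zpow_mul_Xpow (d := d) s t)
  simp only [map_smul, map_mul, hX, hZ, smul_mul_smul_comm, Zpow_mul_Xpow s' t', smul_smul] at h
  have hphase := smul_left_injective ℂ (Xpow_mul_Zpow_ne_zero s' t') h
  rw [mul_comm e, mul_comm _ (c * e)] at hphase
  rw [← ZMod.intCast_eq_intCast_iff]
  push_cast
  exact ZMod.injective_stdAddChar (mul_left_cancel₀ (mul_ne_zero hc he) hphase)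

theorem exists_unitary_conj_eq_of_perm (σ : Equiv.Perm (ZMod d)) {s s' t t' : ℤ}
    (hs : ∀ x, σ (x + s') = σ x + s) (ht : ∀ x, t * σ x = t' * x) :
    ∃ W ∈ Matrix.unitaryGroup (Fin d) ℂ,
      W * Xpow d s * Wᴴ = Xpow d s' ∧ W * Zpow d t * Wᴴ = Zpow d t' := by
  let π : Equiv.Perm (Fin d) := (ZMod.finEquiv d).symm.toEquiv.permCongr σ
  have hπ (i : Fin d) : ZMod.finEquiv d (π i) = σ (ZMod.finEquiv d i) := by
    simp [π, Equiv.permCongr_apply]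
  refine ⟨π.permMatrix ℂ, permMatrix_mem_unitaryGroup π, ?_, ?_⟩ <;>
    rw [permMatrix_mul_mul_conjTranspose]
  · ext i j
    simp only [Matrix.submatrix_apply, Xpow_apply, hπ, ← hs, σ.injective.eq_iff]
  · simp only [Zpow_eq_diagonal, Matrix.submatrix_diagonal_equiv, Function.comp_def, hπ, ht]

theorem exists_unitary_conj_eq_of_gcd_eq {s s' t : ℤ} (hg : Int.gcd s d = Int.gcd s' d)
    (ht : s' * t ≡ s * t [ZMOD d]) :
    ∃ W ∈ Matrix.unitaryGroup (Fin d) ℂ,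
      W * Xpow d s * Wᴴ = Xpow d s' ∧ W * Zpow d t * Wᴴ = Zpow d t := by
  obtain ⟨u, hu⟩ : Associated (s' : ZMod d) (s : ZMod d) := associated_of_gcd_eq_gcd hg.symm
  rw [← ZMod.intCast_eq_intCast_iff] at ht
  push_cast at ht
  let N : Ideal (ZMod d) := Ideal.span {(s' : ZMod d)}
  refine exists_unitary_conj_eq_of_perm (cosetScale N u) (fun x => ?_) ?_
  · rw [cosetScale_add_of_mem N u (Ideal.mem_span_singleton_self _), Units.smul_def, smul_eq_mul,
      mul_comm, hu]
  · refine map_cosetScale_of_map_smul_eq N (AddMonoidHom.mulLeft (t : ZMod d)) u fun h hh => ?_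
    obtain ⟨k, rfl⟩ := Ideal.mem_span_singleton'.mp hh
    simp only [AddMonoidHom.coe_mulLeft, Units.smul_def, smul_eq_mul]
    linear_combination (t * k : ZMod d) * hu - k * ht

end Pauli

theorem PhaseEq.of_eq {n : Type*} {A B : Matrix n n ℂ} (h : A = B) : PhaseEq A B :=
  ⟨1, norm_one, by rw [h, one_smul]⟩

theorem conj_Xa_to_Xua_iff_general (d : ℕ) [NeZero d] (s s' t : ℤ) :
    (∃ W ∈ Matrix.unitaryGroup (Fin d) ℂ,
        PhaseEq (W * Xpow d s * Wᴴ) (Xpow d s') ∧ PhaseEq (W * Zpow d t * Wᴴ) (Zpow d t)) ↔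
      Int.gcd s d = Int.gcd s' d ∧ s' * t ≡ s * t [ZMOD d] := by
  constructor
  · rintro ⟨W, hW, ⟨c, hc, hX⟩, e, he, hZ⟩
    let φ := (Unitary.conjStarAlgAut ℂ (Matrix (Fin d) (Fin d) ℂ) ⟨W, hW⟩).toAlgEquiv
    have hc0 : c ≠ 0 := norm_ne_zero_iff.mp (by simp [hc])
    have he0 : e ≠ 0 := norm_ne_zero_iff.mp (by simp [he])
    exact ⟨gcd_eq_gcd_of_map_Xpow φ hc0 hX,
      mul_modEq_mul_of_map_Xpow_of_map_Zpow φ.toAlgHom hc0 he0 hX hZ⟩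
  · rintro ⟨hg, ht⟩
    obtain ⟨W, hW, hX, hZ⟩ := exists_unitary_conj_eq_of_gcd_eq hg ht
    exact ⟨W, hW, .of_eq hX, .of_eq hZ⟩

/-- **Lemma 3.2.** For positive divisors `a, b` of `d` with `a, b < d` and an
integer `u`, there is a unitary `W` with `W X^a W† ≈ X^{ua}` and `W Z^b W† ≈ Z^b` iff
`gcd(u, d/a) = 1` and `u·a·b ≡ a·b (mod d)`. -/
theorem conj_Xa_to_Xua_iff (d : ℕ) (hd : 2 ≤ d) (a b : ℕ)
    (ha : a ∣ d) (hb : b ∣ d) (ha0 : 0 < a) (hb0 : 0 < b) (had : a < d) (hbd : b < d)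
    (u : ℤ) :
    (∃ W ∈ Matrix.unitaryGroup (Fin d) ℂ,
        PhaseEq (W * Xpow d (a : ℤ) * Wᴴ) (Xpow d (u * a)) ∧
        PhaseEq (W * Zpow d (b : ℤ) * Wᴴ) (Zpow d (b : ℤ))) ↔
    (Int.gcd u ((d / a : ℕ) : ℤ) = 1 ∧ u * a * b ≡ (a : ℤ) * b [ZMOD (d : ℤ)]) := by
  have : NeZero d := ⟨by omega⟩
  rw [conj_Xa_to_Xua_iff_general, gcd_eq_gcd_mul_iff ha ha0]
end

section
/- Let p be a prime, α a positive integer, d = p^α, and let β, γ be integers with 0 ≤ β, γ < α. Let u₁, v₁, u₂, v₂ be integers with 0 ≤ u₁, v₁ < p^{α−γ} and 0 ≤ u₂, v₂ < p^{α−β}. There exists a unitary matrix W on ℂ^{p^α} with W X^{p^γ} W† ≈ X^{u₁ p^γ} Z^{v₁ p^γ} and W Z^{p^β} W† ≈ X^{u₂ p^β} Z^{v₂ p^β} if and only if all three of the following hold: (1) gcd(u₁, v₁, p) = 1 = gcd(u₂, v₂, p); (2) (u₁v₂ − u₂v₁)·p^{β+γ} ≡ p^{β+γ} (mod p^α); and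 (3) gcd(u₁v₂ − u₂v₁, p) = 1. -/
open Matrix

/-!
Conjugation by a unitary preserves the scalar by which two matrices fail to commute. For generalized
Pauli matrices this scalar is `ω` raised to the determinant of the exponents, which gives the
congruence for `D = u₁v₂ - u₂v₁`. Conjugation also sends no nontrivial product `X^{ag} Z^{bh}` to a
scalar, and this excludes common factors of `D` and `p`: a nonzero `N` divisible by `g` and `h` with
`N D = 0` in `ℤ/d` would give such a product whose image is a scalar.

Conversely, suppose first that `D = 1`. Acting on an eigenvector of the image of `Z` by powers of
the image of `X` produces an orthonormal basis on which the two images act as a clock and a shift.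
A unit `D` is reduced to this case by a permutation of `ℤ/d` that commutes with translation by `g`
and turns `h x` into `D h x`; it exists because `D h g = h g`.
-/

open ZMod (stdAddChar)
open Unitary (conjStarAlgAut)

namespace PhaseEq

variable {m n : Type*} {A B C A' B' : Matrix n n ℂ}

lemma refl (A : Matrix n n ℂ) : PhaseEq A A := ⟨1, by simp, by simp⟩

lemma trans (h : PhaseEq A B) (h' : PhaseEq B C) : PhaseEq A C := by
  obtain ⟨c, hc, rfl⟩ := h
  obtain ⟨c', hc', rfl⟩ := h'
  exact ⟨c * c', by simp [hc, hc'], smul_smul c c' C⟩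

lemma symm (h : PhaseEq A B) : PhaseEq B A := by
  obtain ⟨c, hc, rfl⟩ := h
  have hc0 : c ≠ 0 := norm_ne_zero_iff.1 (by simp [hc])
  exact ⟨c⁻¹, by simp [hc], (inv_smul_smul₀ hc0 B).symm⟩

lemma submatrix (h : PhaseEq A B) (f : m → n) :
    PhaseEq (A.submatrix f f) (B.submatrix f f) := by
  obtain ⟨c, hc, rfl⟩ := h
  exact ⟨c, hc, rfl⟩

variable [Fintype n]

lemma mul (h : PhaseEq A A') (h' : PhaseEq B B') : PhaseEq (A * B) (A' * B') := by
  obtain ⟨c, hc, rfl⟩ := h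
  obtain ⟨c', hc', rfl⟩ := h'
  exact ⟨c * c', by simp [hc, hc'], smul_mul_smul_comm c A' c' B'⟩

lemma mul_eq_smul_mul (hA : PhaseEq A A') (hB : PhaseEq B B') {z : ℂ}
    (h : B * A = z • (A * B)) : B' * A' = z • (A' * B') := by
  obtain ⟨c, -, rfl⟩ := hA.symm
  obtain ⟨c', -, rfl⟩ := hB.symm
  rw [smul_mul_smul_comm, smul_mul_smul_comm, h, smul_comm z, mul_comm c']

variable [DecidableEq n]

lemma exists_pow_eq_one {d : ℕ} (hd : d ≠ 0) (h : PhaseEq (A ^ d) 1) :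
    ∃ z : ℂ, ‖z‖ = 1 ∧ (z • A) ^ d = 1 := by
  obtain ⟨c, hc, hA⟩ := h
  have hc0 : c ≠ 0 := norm_ne_zero_iff.1 (by simp [hc])
  obtain ⟨z, hz⟩ := IsAlgClosed.exists_pow_nat_eq c⁻¹ (Nat.pos_of_ne_zero hd)
  refine ⟨z, ?_, by rw [smul_pow, hz, hA, inv_smul_smul₀ hc0]⟩
  rw [← pow_eq_one_iff_of_nonneg (norm_nonneg z) hd, ← norm_pow, hz, norm_inv, hc, inv_one]

variable [Fintype m] [DecidableEq m]

lemma map (φ : Matrix n n ℂ ≃ₐ[ℂ] Matrix m m ℂ) (h : PhaseEq A B) : PhaseEq (φ A) (φ B) := by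
  obtain ⟨c, hc, rfl⟩ := h
  exact ⟨c, hc, map_smul φ c B⟩

end PhaseEq

/-- The pairs `(A, B)` and `(A', B')` are simultaneously conjugate by a unitary, each up to its own
phase: the paper's unitary conjugate equivalence. -/
def UCEquiv {n : Type*} [Fintype n] [DecidableEq n] (A B A' B' : Matrix n n ℂ) : Prop :=
  ∃ W ∈ Matrix.unitaryGroup n ℂ, PhaseEq (W * A * Wᴴ) A' ∧ PhaseEq (W * B * Wᴴ) B'

namespace UCEquiv

variable {m n : Type*} [Fintype m] [DecidableEq m] [Fintype n] [DecidableEq n]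
  {A B A' B' A'' B'' : Matrix n n ℂ}

lemma exists_algEquiv (h : UCEquiv A B A' B') :
    ∃ φ : Matrix n n ℂ ≃ₐ[ℂ] Matrix n n ℂ, PhaseEq (φ A) A' ∧ PhaseEq (φ B) B' :=
  let ⟨W, hW, hA, hB⟩ := h
  ⟨(conjStarAlgAut ℂ _ ⟨W, hW⟩).toAlgEquiv, hA, hB⟩

lemma trans (h : UCEquiv A B A' B') (h' : UCEquiv A' B' A'' B'') : UCEquiv A B A'' B'' := by
  obtain ⟨V, hV, hA, hB⟩ := h
  obtain ⟨W, hW, hA', hB'⟩ := h'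
  have conj_mul (M : Matrix n n ℂ) : W * V * M * (W * V)ᴴ = W * (V * M * Vᴴ) * Wᴴ := by
    simp only [conjTranspose_mul, mul_assoc]
  let φ := (conjStarAlgAut ℂ _ ⟨W, hW⟩).toAlgEquiv
  refine ⟨W * V, mul_mem hW hV, ?_, ?_⟩
  · exact conj_mul A ▸ (hA.map φ).trans hA'
  · exact conj_mul B ▸ (hB.map φ).trans hB'

lemma submatrix (e : m ≃ n) (h : UCEquiv A B A' B') :
    UCEquiv (A.submatrix e e) (B.submatrix e e) (A'.submatrix e e) (B'.submatrix e e) := by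
  obtain ⟨W, hW, hA, hB⟩ := h
  refine ⟨W.submatrix e e, ?_, ?_, ?_⟩
  · rw [mem_unitaryGroup_iff, star_eq_conjTranspose, conjTranspose_submatrix, submatrix_mul_equiv,
      ← star_eq_conjTranspose, mem_unitaryGroup_iff.1 hW, submatrix_one_equiv]
  · simpa only [conjTranspose_submatrix, submatrix_mul_equiv] using hA.submatrix e
  · simpa only [conjTranspose_submatrix, submatrix_mul_equiv] using hB.submatrix e

lemma submatrix_iff (e : m ≃ n) :
    UCEquiv (A.submatrix e e) (B.submatrix e e) (A'.submatrix e e) (B'.submatrix e e) ↔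
      UCEquiv A B A' B' :=
  ⟨fun h => by simpa using h.submatrix e.symm, submatrix e⟩

lemma submatrix_perm (σ : Equiv.Perm n) :
    UCEquiv A B (A.submatrix σ σ) (B.submatrix σ σ) := by
  have conj_eq (M : Matrix n n ℂ) :
      σ.permMatrix ℂ * M * (σ.permMatrix ℂ)ᴴ = M.submatrix σ σ := by
    rw [conjTranspose_permMatrix, Equiv.Perm.permMatrix, Equiv.Perm.permMatrix,
      PEquiv.toMatrix_toPEquiv_mul, PEquiv.mul_toMatrix_toPEquiv, submatrix_submatrix]
    rfl
  refine ⟨σ.permMatrix ℂ, ?_, ?_, ?_⟩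
  · simpa [mem_unitaryGroup_iff, star_eq_conjTranspose] using conj_eq 1
  · exact conj_eq A ▸ .refl _
  · exact conj_eq B ▸ .refl _

end UCEquiv

/-- The standard symplectic form on `R²`, i.e. the determinant of the pair `x, y`. -/
def symp {R : Type*} [CommRing R] (x y : R × R) : R := x.1 * y.2 - y.1 * x.2

lemma symp_smul_smul {R : Type*} [CommRing R] (a b : R) (x y : R × R) :
    symp (a • x) (b • y) = symp x y * (b * a) := by
  simp only [symp, Prod.smul_fst, Prod.smul_snd, smul_eq_mul]
  ring

lemma eq_zero_of_mul_symp_eq_zero {R : Type*} [CommRing R] {N : R} {x y : R × R}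
    (hinj : ∀ s t : R, N • (s • x + t • y) = 0 → N * s = 0 ∧ N * t = 0)
    (hN : N * symp x y = 0) : N = 0 := by
  have hx₂ : N * -x.2 = 0 := by
    refine (hinj y.2 (-x.2) (Prod.ext ?_ ?_)).2
    · simp only [symp, Prod.fst_add, Prod.smul_fst, smul_eq_mul, Prod.fst_zero] at hN ⊢
      linear_combination hN
    · simp [mul_comm]
  have hx₁ : N * x.1 = 0 := by
    refine (hinj (-y.1) x.1 (Prod.ext ?_ ?_)).2
    · simp [mul_comm]
    · simp only [symp, Prod.snd_add, Prod.smul_snd, smul_eq_mul, Prod.snd_zero] at hN ⊢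
      linear_combination hN
  have hx : N • ((1 : R) • x + (0 : R) • y) = 0 := by
    simpa using Prod.ext hx₁ (by simpa using hx₂)
  simpa using (hinj 1 0 hx).1

/-- The Weyl operator `X^{x₁} Z^{x₂}`: the generalized Pauli matrices with rows, columns and
exponents all taken in `ℤ/d`, so that reduction modulo `d` is built in. -/
noncomputable def weyl {d : ℕ} [NeZero d] (x : ZMod d × ZMod d) :
    Matrix (ZMod d) (ZMod d) ℂ :=
  of fun i j => if i = j + x.1 then stdAddChar (x.2 * j) else 0

section Weyl

variable {d : ℕ} [NeZero d]

lemma weyl_zero : weyl (0 : ZMod d × ZMod d) = 1 := by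
  ext i j
  simp [weyl, one_apply]

lemma weyl_mul (x y : ZMod d × ZMod d) :
    weyl x * weyl y = stdAddChar (x.2 * y.1) • weyl (x + y) := by
  ext i j
  have key : x.2 * (j + y.1) = x.2 * y.1 + x.2 * j := by ring
  simp [weyl, mul_apply, key, add_mul, AddChar.map_add_eq_mul, mul_assoc, add_assoc,
    add_comm y.1 x.1]

lemma weyl_mem_unitaryGroup (x : ZMod d × ZMod d) : weyl x ∈ unitaryGroup (ZMod d) ℂ := by
  rw [mem_unitaryGroup_iff']
  ext i j
  obtain rfl | hij := eq_or_ne i j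
  · simp [weyl, star_apply, mul_apply, ← Complex.normSq_eq_conj_mul_self, Complex.normSq_eq_norm_sq]
  · simp [weyl, star_apply, mul_apply, hij, hij.symm]

lemma weyl_mul_comm (x y : ZMod d × ZMod d) :
    weyl y * weyl x = stdAddChar (symp x y) • (weyl x * weyl y) := by
  rw [weyl_mul, weyl_mul, smul_smul, ← AddChar.map_add_eq_mul, add_comm y x]
  congr 2
  rw [symp]
  ring

lemma phaseEq_weyl_mul (x y : ZMod d × ZMod d) : PhaseEq (weyl x * weyl y) (weyl (x + y)) :=
  ⟨_, AddChar.norm_apply _ _, weyl_mul x y⟩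

lemma phaseEq_weyl_pow (x : ZMod d × ZMod d) (k : ℕ) : PhaseEq (weyl x ^ k) (weyl (k • x)) := by
  induction k with
  | zero => simpa [weyl_zero] using PhaseEq.refl _
  | succ k ih =>
    rw [pow_succ, succ_nsmul]
    exact (ih.mul (.refl _)).trans (phaseEq_weyl_mul _ _)

lemma eq_zero_of_phaseEq_weyl_one {x : ZMod d × ZMod d} (h : PhaseEq (weyl x) 1) : x = 0 := by
  obtain ⟨c, hc, h⟩ := h
  have hc0 : c ≠ 0 := norm_ne_zero_iff.1 (by simp [hc])
  have apply_self (j : ZMod d) : (if x.1 = 0 then stdAddChar (x.2 * j) else 0) = c := by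
    simpa [weyl, eq_comm] using congr($h j j)
  have hx₁ : x.1 = 0 := by
    by_contra hne
    exact hc0 (by simpa [hne] using (apply_self 0).symm)
  have hx₂ : stdAddChar x.2 = stdAddChar (0 : ZMod d) := by
    simpa [hx₁] using (apply_self 1).trans (apply_self 0).symm
  exact Prod.ext hx₁ (ZMod.injective_stdAddChar hx₂)

lemma isUnit_weyl (x : ZMod d × ZMod d) : IsUnit (weyl x) :=
  (Unitary.toUnits ⟨weyl x, weyl_mem_unitaryGroup x⟩).isUnit

end Weyl

section Automorphism

variable {d : ℕ} [NeZero d] {φ : Matrix (ZMod d) (ZMod d) ℂ ≃ₐ[ℂ] Matrix (ZMod d) (ZMod d) ℂ}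
  {x y x' y' : ZMod d × ZMod d}

lemma phaseEq_map_weyl_add (h : PhaseEq (φ (weyl x)) (weyl x'))
    (h' : PhaseEq (φ (weyl y)) (weyl y')) : PhaseEq (φ (weyl (x + y))) (weyl (x' + y')) := by
  have hxy := ((phaseEq_weyl_mul x y).map φ).symm
  rw [map_mul] at hxy
  exact hxy.trans ((h.mul h').trans (phaseEq_weyl_mul x' y'))

lemma phaseEq_map_weyl_smul (h : PhaseEq (φ (weyl x)) (weyl x')) (a : ZMod d) :
    PhaseEq (φ (weyl (a • x))) (weyl (a • x')) := by
  rw [← ZMod.natCast_zmod_val a, Nat.cast_smul_eq_nsmul, Nat.cast_smul_eq_nsmul]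
  induction a.val with
  | zero => simpa [weyl_zero] using PhaseEq.refl _
  | succ k ih =>
    rw [succ_nsmul, succ_nsmul]
    exact phaseEq_map_weyl_add ih h

lemma UCEquiv.weyl_smul (h : UCEquiv (weyl x) (weyl y) (weyl x') (weyl y')) (a b : ZMod d) :
    UCEquiv (weyl (a • x)) (weyl (b • y)) (weyl (a • x')) (weyl (b • y')) := by
  obtain ⟨W, hW, hx, hy⟩ := h
  let φ := (conjStarAlgAut ℂ _ ⟨W, hW⟩).toAlgEquiv
  exact ⟨W, hW, phaseEq_map_weyl_smul (φ := φ) hx a, phaseEq_map_weyl_smul (φ := φ) hy b⟩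

lemma symp_eq_of_phaseEq_map_weyl (h : PhaseEq (φ (weyl x)) (weyl x'))
    (h' : PhaseEq (φ (weyl y)) (weyl y')) : symp x' y' = symp x y := by
  have hcomm : φ (weyl y) * φ (weyl x) = stdAddChar (symp x y) • (φ (weyl x) * φ (weyl y)) := by
    rw [← map_mul, ← map_mul, weyl_mul_comm, map_smul]
  have hcomm' := h.mul_eq_smul_mul h' hcomm
  have hne : weyl x' * weyl y' ≠ 0 :=
    ((isUnit_weyl x').mul (isUnit_weyl y')).ne_zero
  rw [weyl_mul_comm] at hcomm'
  exact ZMod.injective_stdAddChar (smul_left_injective ℂ hne hcomm')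

lemma eq_zero_of_phaseEq_map_weyl (h : PhaseEq (φ (weyl x)) (weyl 0)) : x = 0 := by
  have h' := h.map φ.symm
  rw [φ.symm_apply_apply, weyl_zero, map_one] at h'
  exact eq_zero_of_phaseEq_weyl_one h'

lemma eq_zero_of_mul_symp_eq_zero_of_phaseEq {g h N : ZMod d}
    (hX : PhaseEq (φ (weyl (g • (1, 0)))) (weyl (g • x)))
    (hZ : PhaseEq (φ (weyl (h • (0, 1)))) (weyl (h • y)))
    (hg : g ∣ N) (hh : h ∣ N) (hN : N * symp x y = 0) : N = 0 := by
  refine eq_zero_of_mul_symp_eq_zero (fun s t hst => ?_) hN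
  obtain ⟨a, ha⟩ := hg
  obtain ⟨b, hb⟩ := hh
  have hsum : (s * a) • g • x + (t * b) • h • y = 0 := by
    rw [← hst, smul_add, smul_smul, smul_smul, smul_smul, smul_smul, mul_comm N, mul_comm N,
      mul_assoc s, mul_assoc t, mul_comm a, mul_comm b, ← ha, ← hb]
  have hzero := eq_zero_of_phaseEq_map_weyl
    (hsum ▸ phaseEq_map_weyl_add (phaseEq_map_weyl_smul hX (s * a))
      (phaseEq_map_weyl_smul hZ (t * b)))
  constructor
  · calc N * s = s * a * g := by rw [ha]; ring
      _ = 0 := by simpa using congr($hzero.1)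
  · calc N * t = t * b * h := by rw [hb]; ring
      _ = 0 := by simpa using congr($hzero.2)

end Automorphism

lemma gcd_gcd_eq_one_of_forall_dvd {u v D r : ℤ} (hD : Int.gcd D r = 1)
    (huv : ∀ k, k ∣ u → k ∣ v → k ∣ D) :
    Int.gcd u (Int.gcd v r) = 1 := by
  set k := Int.gcd u (Int.gcd v r)
  have hu : (k : ℤ) ∣ u := Int.gcd_dvd_left ..
  have hvr : (k : ℤ) ∣ Int.gcd v r := Int.gcd_dvd_right ..
  have hv : (k : ℤ) ∣ v := hvr.trans (Int.gcd_dvd_left ..)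
  have hr : (k : ℤ) ∣ r := hvr.trans (Int.gcd_dvd_right ..)
  exact Nat.dvd_one.1 (hD ▸ Int.dvd_gcd (huv k hu hv) hr)

lemma gcd_eq_one_of_forall_mul_eq_zero {d r : ℕ} [NeZero d] {g h D : ℤ} (hg : r * g ∣ d)
    (hh : r * h ∣ d)
    (hD : ∀ N : ZMod d, (g : ZMod d) ∣ N → (h : ZMod d) ∣ N → N * D = 0 → N = 0) :
    Int.gcd D r = 1 := by
  obtain ⟨r', hr'⟩ := Int.gcd_dvd_right D r
  obtain ⟨D', hD'⟩ := Int.gcd_dvd_left D r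
  generalize Int.gcd D r = k at hr' hD'
  obtain ⟨g', hg'⟩ := hg
  obtain ⟨h', hh'⟩ := hh
  set N : ℤ := g * g' * r'
  have hkN : k * N = d := by linear_combination -hg' - g * g' * hr'
  have hkN0 : (k : ℤ) * N ≠ 0 := hkN ▸ NeZero.ne (d : ℤ)
  have hN : N = h * h' * r' := by
    refine mul_left_cancel₀ (left_ne_zero_of_mul hkN0) ?_
    linear_combination hkN + hh' + h * h' * hr'
  have hdvd : (d : ℤ) ∣ N := by
    rw [← ZMod.intCast_zmod_eq_zero_iff_dvd]
    refine hD N ⟨g' * r', by simp [N, mul_assoc]⟩ ⟨h' * r', by simp [hN, mul_assoc]⟩ ?_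
    rw [← Int.cast_mul, ZMod.intCast_zmod_eq_zero_iff_dvd]
    exact ⟨D', by linear_combination N * hD' + D' * hkN⟩
  have hk : (k : ℤ) ∣ 1 := by
    rw [← mul_dvd_mul_iff_right (right_ne_zero_of_mul hkN0), one_mul, hkN]
    exact hdvd
  exact Nat.dvd_one.1 (by exact_mod_cast hk)

section Eigenbasis

variable {n : Type*} [Fintype n]

lemma exists_unit_eigenvector [Nonempty n] (B : Matrix n n ℂ) :
    ∃ (μ : ℂ) (v : n → ℂ), star v ⬝ᵥ v = 1 ∧ B *ᵥ v = μ • v := by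
  classical
  obtain ⟨μ, hμ⟩ := Module.End.exists_eigenvalue (toEuclideanLin B)
  obtain ⟨v, hv⟩ := hμ.exists_hasEigenvector
  let w := (‖v‖⁻¹ : ℂ) • v
  have hw : ‖w‖ = 1 := norm_smul_inv_norm hv.2
  have hBw : toEuclideanLin B w = μ • w := by rw [map_smul, hv.apply_eq_smul, smul_comm]
  refine ⟨μ, w.ofLp, ?_, congr(($hBw).ofLp)⟩
  rw [dotProduct_comm, ← EuclideanSpace.inner_eq_star_dotProduct, inner_self_eq_norm_sq_to_K, hw]
  simp

variable [DecidableEq n]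

lemma star_mulVec_dotProduct_mulVec {R : Type*} [CommRing R] [StarRing R] {U : Matrix n n R}
    (hU : U ∈ unitaryGroup n R) (x y : n → R) :
    star (U *ᵥ x) ⬝ᵥ (U *ᵥ y) = star x ⬝ᵥ y := by
  rw [star_mulVec, dotProduct_mulVec, vecMul_vecMul, ← star_eq_conjTranspose,
    mem_unitaryGroup_iff'.1 hU, vecMul_one]

lemma star_mul_mul_dotProduct_of_mulVec_eq_smul {R : Type*} [CommRing R] [StarRing R]
    {U : Matrix n n R} (hU : U ∈ unitaryGroup n R) {x y : n → R} {a b : R}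
    (hx : U *ᵥ x = a • x) (hy : U *ᵥ y = b • y) : (star a * b) * (star x ⬝ᵥ y) = star x ⬝ᵥ y := by
  calc (star a * b) * (star x ⬝ᵥ y) = star (a • x) ⬝ᵥ (b • y) := by
        rw [star_smul, smul_dotProduct, dotProduct_smul, smul_eq_mul, smul_eq_mul, mul_assoc]
    _ = star x ⬝ᵥ y := by rw [← hx, ← hy, star_mulVec_dotProduct_mulVec hU]

lemma mulVec_pow_mulVec_of_mul_eq_smul {R : Type*} [CommRing R] {A B : Matrix n n R} {c μ : R}
    {v : n → R} (hBA : B * A = c • (A * B)) (hv : B *ᵥ v = μ • v) (k : ℕ) :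
    B *ᵥ (A ^ k *ᵥ v) = (μ * c ^ k) • (A ^ k *ᵥ v) := by
  induction k with
  | zero => simp [hv]
  | succ k ih =>
    rw [pow_succ', ← mulVec_mulVec, mulVec_mulVec _ B, hBA, smul_mulVec, ← mulVec_mulVec, ih,
      mulVec_smul, smul_smul]
    congr 1
    ring

variable {d : ℕ} [NeZero d]

lemma exists_orthonormal_cyclic [Nonempty n] {A B : Matrix n n ℂ} (hA : A ∈ unitaryGroup n ℂ)
    (hB : B ∈ unitaryGroup n ℂ) (hAd : A ^ d = 1)
    (hBA : B * A = stdAddChar (1 : ZMod d) • (A * B)) :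
    ∃ (μ : ℂ) (w : ZMod d → n → ℂ), ‖μ‖ = 1 ∧
      (∀ k l, star (w k) ⬝ᵥ w l = if k = l then 1 else 0) ∧
      (∀ k, A *ᵥ w k = w (k + 1)) ∧ ∀ k, B *ᵥ w k = (μ * stdAddChar k) • w k := by
  obtain ⟨μ, v, hv, hBv⟩ := exists_unit_eigenvector B
  let w (k : ZMod d) : n → ℂ := A ^ k.val *ᵥ v
  have hAw (k : ZMod d) : A *ᵥ w k = w (k + 1) := by
    have hmod : k.val + 1 ≡ (k + 1).val [MOD d] := by simp [← ZMod.natCast_eq_natCast_iff]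
    rw [mulVec_mulVec, ← pow_succ', pow_eq_pow_mod _ hAd, hmod, ← pow_eq_pow_mod _ hAd]
  have hBw (k : ZMod d) : B *ᵥ w k = (μ * stdAddChar k) • w k := by
    rw [mulVec_pow_mulVec_of_mul_eq_smul hBA hBv, ← AddChar.map_nsmul_eq_pow, nsmul_one,
      ZMod.natCast_zmod_val]
  have hμ : star μ * μ = 1 := by
    simpa [hv] using star_mul_mul_dotProduct_of_mulVec_eq_smul hB hBv hBv
  have hμ_norm : ‖μ‖ = 1 :=
    CStarRing.norm_of_mem_unitary (Unitary.mem_iff.2 ⟨hμ, by rw [mul_comm, hμ]⟩)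
  refine ⟨μ, w, hμ_norm, fun k l => ?_, hAw, hBw⟩
  split_ifs with hkl
  · rw [hkl, star_mulVec_dotProduct_mulVec (pow_mem hA _), hv]
  · have hfix := star_mul_mul_dotProduct_of_mulVec_eq_smul hB (hBw k) (hBw l)
    have hphase : star (μ * stdAddChar k) * (μ * stdAddChar l) = stdAddChar (l - k) := by
      rw [star_mul', sub_eq_neg_add, AddChar.map_add_eq_mul, AddChar.map_neg_eq_conj,
        mul_mul_mul_comm, hμ, one_mul, Complex.star_def]
    have hne : stdAddChar (l - k) ≠ stdAddChar (0 : ZMod d) :=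
      ZMod.injective_stdAddChar.ne (sub_ne_zero.2 (Ne.symm hkl))
    rw [AddChar.map_zero_eq_one] at hne
    rw [hphase] at hfix
    exact (mul_left_eq_self₀.1 hfix).resolve_left hne

end Eigenbasis

-- `ρ x` represents the residue of `x` modulo `g`; `σ` multiplies that representative by `D` and
-- leaves the difference `x - ρ x`, a multiple of `g`, alone.
lemma exists_perm_add_and_mul {R : Type*} [CommRing R] [Finite R] {D g h : R} (hD : IsUnit D)
    (hgh : D * (h * g) = h * g) :
    ∃ σ : Equiv.Perm R, (∀ x, σ (x + g) = σ x + g) ∧ ∀ x, h * σ x = D * h * x := by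
  let I : Ideal R := Ideal.span {g}
  let ρ (x : R) : R := (Ideal.Quotient.mk I x).out
  have mk_ρ (x : R) : Ideal.Quotient.mk I (ρ x) = Ideal.Quotient.mk I x := Quotient.out_eq' _
  let f (x : R) : R := x + (D - 1) * ρ x
  have mk_f (x : R) : Ideal.Quotient.mk I (f x) = Ideal.Quotient.mk I (D * x) := by
    simp only [f, map_add, map_mul, mk_ρ, map_sub, map_one]
    ring
  have hf : Function.Injective f := by
    intro x y hxy
    have hmk : Ideal.Quotient.mk I x = Ideal.Quotient.mk I y := by
      have hDmk := congrArg (Ideal.Quotient.mk I) hxy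
      rw [mk_f, mk_f, map_mul, map_mul] at hDmk
      exact (hD.map (Ideal.Quotient.mk I)).mul_left_cancel hDmk
    have hρ : ρ x = ρ y := congrArg Quotient.out hmk
    simpa only [f, hρ, add_left_inj] using hxy
  refine ⟨Equiv.ofBijective f (Finite.injective_iff_bijective.1 hf), fun x => ?_, fun x => ?_⟩
  · have hρ : ρ (x + g) = ρ x := congrArg Quotient.out
      (Ideal.Quotient.eq.2 (by simp [I]))
    simp only [Equiv.ofBijective_apply, f, hρ]
    ring
  · obtain ⟨q, hq⟩ : g ∣ x - ρ x :=
      Ideal.mem_span_singleton.1 (Ideal.Quotient.eq.1 (mk_ρ x).symm)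
    simp only [Equiv.ofBijective_apply, f]
    linear_combination (1 - D) * h * hq - q * hgh

section Conjugation

variable {d : ℕ} [NeZero d]

lemma ucEquiv_weyl_of_mul_eq_smul {A B : Matrix (ZMod d) (ZMod d) ℂ}
    (hA : A ∈ unitaryGroup (ZMod d) ℂ) (hB : B ∈ unitaryGroup (ZMod d) ℂ) (hAd : A ^ d = 1)
    (hBA : B * A = stdAddChar (1 : ZMod d) • (A * B)) :
    UCEquiv (weyl (1, 0)) (weyl (0, 1)) A B := by
  obtain ⟨μ, w, hμ, horth, hAw, hBw⟩ := exists_orthonormal_cyclic hA hB hAd hBA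
  let W : Matrix (ZMod d) (ZMod d) ℂ := of fun i k => w k i
  have hW : W ∈ unitaryGroup (ZMod d) ℂ := mem_unitaryGroup_iff'.2 (Matrix.ext horth)
  have hWW : W * Wᴴ = 1 := mem_unitaryGroup_iff.1 hW
  have hAW : A * W = W * weyl (1, 0) := by
    ext i k
    calc (A * W) i k = w (k + 1) i := congrFun (hAw k) i
      _ = (W * weyl (1, 0) : Matrix (ZMod d) (ZMod d) ℂ) i k := by simp [W, weyl, mul_apply]
  have hBW : B * W = μ • (W * weyl (0, 1)) := by
    ext i k
    calc (B * W) i k = μ * stdAddChar k * w k i := congrFun (hBw k) i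
      _ = (μ • (W * weyl (0, 1)) : Matrix (ZMod d) (ZMod d) ℂ) i k := by
          simp [W, weyl, mul_apply, mul_left_comm, mul_comm]
  refine ⟨W, hW, ⟨1, by simp, ?_⟩, PhaseEq.symm ⟨μ, hμ, ?_⟩⟩
  · rw [← hAW, mul_assoc, hWW, mul_one, one_smul]
  · rw [← Matrix.smul_mul, ← hBW, mul_assoc, hWW, mul_one]

lemma ucEquiv_weyl_of_symp_eq_one {x y : ZMod d × ZMod d} (h : symp x y = 1) :
    UCEquiv (weyl (1, 0)) (weyl (0, 1)) (weyl x) (weyl y) := by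
  have hpow : PhaseEq (weyl x ^ d) 1 := by
    have hdx : d • x = 0 := by rw [← Nat.cast_smul_eq_nsmul (ZMod d), ZMod.natCast_self, zero_smul]
    simpa only [hdx, weyl_zero] using phaseEq_weyl_pow x d
  obtain ⟨z, hz, hzd⟩ := hpow.exists_pow_eq_one (NeZero.ne d)
  have hzU : z • weyl x ∈ unitaryGroup (ZMod d) ℂ :=
    Unitary.smul_mem_of_mem (by simp [Unitary.mem_iff, Complex.mul_conj', Complex.conj_mul', hz])
      (weyl_mem_unitaryGroup x)
  obtain ⟨W, hW, hX, hZ⟩ := ucEquiv_weyl_of_mul_eq_smul hzU (weyl_mem_unitaryGroup y) hzd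
    (by rw [mul_smul_comm, smul_mul_assoc, weyl_mul_comm, h, smul_comm])
  exact ⟨W, hW, hX.trans ⟨z, hz, rfl⟩, hZ⟩

lemma ucEquiv_weyl_dilation {D g h : ZMod d} (hD : IsUnit D) (hgh : D * (h * g) = h * g) :
    UCEquiv (weyl (g, 0)) (weyl (0, h)) (weyl (g, 0)) (weyl (0, D * h)) := by
  obtain ⟨σ, hσg, hσh⟩ := exists_perm_add_and_mul hD hgh
  have hX : (weyl (g, 0)).submatrix σ σ = weyl (g, 0) := by
    ext i j
    simp [weyl, ← hσg]
  have hZ : (weyl (0, h)).submatrix σ σ = weyl (0, D * h) := by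
    ext i j
    simp [weyl, hσh]
  have hσ := UCEquiv.submatrix_perm (A := weyl (g, 0)) (B := weyl (0, h)) σ
  rwa [hX, hZ] at hσ

lemma ucEquiv_weyl_smul_of_isUnit_symp {g h : ZMod d} {x y : ZMod d × ZMod d}
    (hxy : IsUnit (symp x y)) (hgh : symp x y * (h * g) = h * g) :
    UCEquiv (weyl (g • (1, 0))) (weyl (h • (0, 1))) (weyl (g • x)) (weyl (h • y)) := by
  obtain ⟨e, he⟩ := hxy.exists_left_inv
  have hsymp : symp x (e • y) = 1 := by
    rw [← one_smul (ZMod d) x, symp_smul_smul, mul_one, mul_comm, he]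
  have hclifford := (ucEquiv_weyl_of_symp_eq_one hsymp).weyl_smul g (symp x y * h)
  have hscale : (symp x y * h) • e • y = h • y := by
    rw [smul_smul]
    congr 1
    linear_combination h * he
  rw [hscale] at hclifford
  simpa using (ucEquiv_weyl_dilation hxy hgh).trans (by simpa using hclifford)

end Conjugation

section Reindexing

lemma Xpow_eq_GPM (d : ℕ) (s : ℤ) : Xpow d s = GPM d s 0 := by
  simp [GPM, Zpow]

variable {d : ℕ} [NeZero d]

/-- Reduction modulo `d` of the basis labels `0, …, d - 1`. -/
def residue (d : ℕ) [NeZero d] : Fin d ≃ ZMod d where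
  toFun i := (i : ℕ)
  invFun x := ⟨x.val, x.val_lt⟩
  left_inv i := Fin.ext (ZMod.val_cast_of_lt i.2)
  right_inv x := ZMod.natCast_zmod_val x

lemma eq_emod_iff_residue_eq_add (s : ℤ) (i j : Fin d) :
    ((i : ℕ) : ℤ) = ((j : ℕ) + s) % d ↔ residue d i = residue d j + s := by
  have hi : ((i : ℕ) : ℤ) % d = (i : ℕ) := Int.emod_eq_of_lt (by positivity) (by exact_mod_cast i.2)
  rw [← hi]
  exact (ZMod.intCast_eq_intCast_iff (i : ℕ) ((j : ℕ) + s) d).symm.trans (by simp [residue])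

lemma exp_eq_stdAddChar_mul_residue (t : ℤ) (j : Fin d) :
    Complex.exp (2 * Real.pi * Complex.I * t * (j : ℕ) / d) =
      stdAddChar ((t : ZMod d) * residue d j) := by
  have hcast : (t : ZMod d) * residue d j = ((t * (j : ℕ) : ℤ) : ZMod d) := by simp [residue]
  rw [hcast, ZMod.stdAddChar_coe]
  push_cast
  ring_nf

lemma GPM_eq_submatrix_weyl (s t : ℤ) :
    GPM d s t = (weyl (s, t)).submatrix (residue d) (residue d) := by
  ext i j
  simp [GPM, Xpow, Zpow, weyl, eq_emod_iff_residue_eq_add, exp_eq_stdAddChar_mul_residue]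

lemma Zpow_eq_GPM (t : ℤ) : Zpow d t = GPM d 0 t := by
  have hX : Xpow d 0 = 1 := by
    ext i j
    simp only [Xpow, of_apply, eq_emod_iff_residue_eq_add]
    simp [one_apply]
  rw [GPM, hX, one_mul]

lemma ucEquiv_Xpow_Zpow_iff (g h u₁ v₁ u₂ v₂ : ℤ) :
    UCEquiv (Xpow d g) (Zpow d h) (GPM d (u₁ * g) (v₁ * g)) (GPM d (u₂ * h) (v₂ * h)) ↔
      UCEquiv (weyl ((g : ZMod d) • (1, 0))) (weyl ((h : ZMod d) • (0, 1)))
        (weyl ((g : ZMod d) • ((u₁ : ZMod d), (v₁ : ZMod d))))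
        (weyl ((h : ZMod d) • ((u₂ : ZMod d), (v₂ : ZMod d)))) := by
  simp only [Xpow_eq_GPM, Zpow_eq_GPM, GPM_eq_submatrix_weyl, UCEquiv.submatrix_iff]
  simp [mul_comm]

end Reindexing

theorem uc_equiv_prime_power_iff_general {d r k : ℕ} [NeZero d] {g h : ℤ} (hg : r * g ∣ d)
    (hh : r * h ∣ d) (hd : d ∣ r ^ k) (u₁ v₁ u₂ v₂ : ℤ) :
    UCEquiv (Xpow d g) (Zpow d h) (GPM d (u₁ * g) (v₁ * g)) (GPM d (u₂ * h) (v₂ * h)) ↔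
    (Int.gcd u₁ (Int.gcd v₁ (r : ℤ) : ℤ) = 1 ∧
     Int.gcd u₂ (Int.gcd v₂ (r : ℤ) : ℤ) = 1 ∧
     (u₁ * v₂ - u₂ * v₁) * (h * g) ≡ h * g [ZMOD d] ∧
     Int.gcd (u₁ * v₂ - u₂ * v₁) (r : ℤ) = 1) := by
  set D : ℤ := u₁ * v₂ - u₂ * v₁
  have hsymp : symp ((u₁ : ZMod d), (v₁ : ZMod d)) (↑u₂, ↑v₂) = D := by simp [symp, D]
  have hmod : D * (h * g) ≡ h * g [ZMOD d] ↔ (D : ZMod d) * (h * g) = h * g := by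
    simp [← ZMod.intCast_eq_intCast_iff]
  refine (ucEquiv_Xpow_Zpow_iff g h u₁ v₁ u₂ v₂).trans ⟨fun hUC => ?_, ?_⟩
  · obtain ⟨φ, hX, hZ⟩ := hUC.exists_algEquiv
    have hDr : Int.gcd D r = 1 := gcd_eq_one_of_forall_mul_eq_zero hg hh fun N hgN hhN hN =>
      eq_zero_of_mul_symp_eq_zero_of_phaseEq hX hZ hgN hhN (hsymp ▸ hN)
    refine ⟨gcd_gcd_eq_one_of_forall_dvd hDr fun _ hu hv => ?_,
      gcd_gcd_eq_one_of_forall_dvd hDr fun _ hu hv => ?_, hmod.2 ?_, hDr⟩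
    · exact dvd_sub (hu.mul_right _) (hv.mul_left _)
    · exact dvd_sub (hv.mul_left _) (hu.mul_right _)
    · have hpres := symp_eq_of_phaseEq_map_weyl hX hZ
      rw [symp_smul_smul, symp_smul_smul, hsymp] at hpres
      simpa [symp] using hpres
  · rintro ⟨-, -, hDgh, hDr⟩
    have hDd : IsCoprime (d : ℤ) D :=
      (Int.isCoprime_iff_gcd_eq_one.2 hDr).symm.pow_left.of_isCoprime_of_dvd_left
        (by exact_mod_cast hd)
    exact ucEquiv_weyl_smul_of_isUnit_symp
      (hsymp ▸ (ZMod.coe_int_isUnit_iff_isCoprime D d).2 hDd) (hsymp ▸ hmod.1 hDgh)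

/-- **Corollary 3.1.** The prime-power case `d = p^α` of Theorem 3.1, for
`X^{p^γ}` and `Z^{p^β}` with `0 ≤ β, γ < α`. -/
theorem uc_equiv_prime_power_iff (p : ℕ) (hp : p.Prime) (α : ℕ) (hα : 1 ≤ α)
    (β γ : ℕ) (hβ : β < α) (hγ : γ < α)
    (u₁ v₁ u₂ v₂ : ℤ)
    (hu₁0 : 0 ≤ u₁) (hu₁ : u₁ < (p : ℤ) ^ (α - γ)) (hv₁0 : 0 ≤ v₁) (hv₁ : v₁ < (p : ℤ) ^ (α - γ))
    (hu₂0 : 0 ≤ u₂) (hu₂ : u₂ < (p : ℤ) ^ (α - β)) (hv₂0 : 0 ≤ v₂) (hv₂ : v₂ < (p : ℤ) ^ (α - β)) :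
    (∃ W ∈ Matrix.unitaryGroup (Fin (p ^ α)) ℂ,
        PhaseEq (W * Xpow (p ^ α) ((p : ℤ) ^ γ) * Wᴴ)
          (GPM (p ^ α) (u₁ * (p : ℤ) ^ γ) (v₁ * (p : ℤ) ^ γ)) ∧
        PhaseEq (W * Zpow (p ^ α) ((p : ℤ) ^ β) * Wᴴ)
          (GPM (p ^ α) (u₂ * (p : ℤ) ^ β) (v₂ * (p : ℤ) ^ β))) ↔
    (Int.gcd u₁ (Int.gcd v₁ (p : ℤ) : ℤ) = 1 ∧
     Int.gcd u₂ (Int.gcd v₂ (p : ℤ) : ℤ) = 1 ∧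
     (u₁ * v₂ - u₂ * v₁) * (p : ℤ) ^ (β + γ) ≡ (p : ℤ) ^ (β + γ) [ZMOD ((p : ℤ) ^ α)] ∧
     Int.gcd (u₁ * v₂ - u₂ * v₁) (p : ℤ) = 1) := by
  have : NeZero (p ^ α) := ⟨pow_ne_zero α hp.ne_zero⟩
  simpa [pow_add, UCEquiv] using uc_equiv_prime_power_iff_general (d := p ^ α) (r := p) (k := α)
    (g := p ^ γ) (h := p ^ β) (by simpa [← pow_succ'] using pow_dvd_pow (p : ℤ) hγ)
    (by simpa [← pow_succ'] using pow_dvd_pow (p : ℤ) hβ) dvd_rfl u₁ v₁ u₂ v₂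
end
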